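/- 8πG − 14 ζ(3) = ∑_{n=1}^∞ 2^{4n} (n!)⁴ / (n³ ((2n)!)²). -/

import Mathlib

open Real

/-!
The proof computes `∫₀^{π/2} θ² / sin θ dθ` in two ways.

Write `w n = 4ⁿ (n!)² / (2n)!`. The remainder `R N θ = θ² - ½ ∑_{1 ≤ n ≤ N} w n sin²ⁿ θ / n²` of the
power series of `arcsin²` (at `sin θ`) satisfies `R N 0 = (R N)' 0 = 0` and, by telescoping,
`(R N)'' θ = 2 w N sin²ᴺ θ`. Comparing second derivatives gives
`0 ≤ R N θ ≤ w N (sin θ)²ᴺ θ²`, so `R N → 0` pointwise on `[0, π/2)`, while `R N θ ≤ θ²` is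
immediate. Dominated convergence for `R N θ / sin θ` and the Wallis integrals
`∫₀^{π/2} sin²ⁿ⁻¹ = w n / (2n)` give `∑ (w n)² / n³ = 4 ∫₀^{π/2} θ² / sin θ dθ`.

On the other hand `1 / sin θ = 2 ∑_{j < N} sin ((2j+1)θ) + cos (2Nθ) / sin θ`. The last term
disappears in the limit by the Riemann–Lebesgue lemma, and
`∫₀^{π/2} θ² sin (kθ) dθ = π (-1)ʲ / k² - 2 / k³` for `k = 2j+1`, so that
`∫₀^{π/2} θ² / sin θ dθ = 2πG - 4 ∑ 1 / (2j+1)³ = 2πG - (7/2) ζ(3)`.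
-/

open Filter Topology MeasureTheory

/-! ### Wallis integrals -/

/-- The Wallis ratio `4ⁿ (n!)² / (2n)! = (2n)!! / (2n-1)!!`. -/
noncomputable def wallisRatio (n : ℕ) : ℝ :=
  (4 : ℝ) ^ n * (n.factorial : ℝ) ^ 2 / ((2 * n).factorial : ℝ)

lemma wallisRatio_zero : wallisRatio 0 = 1 := by simp [wallisRatio]

lemma wallisRatio_pos (n : ℕ) : 0 < wallisRatio n := by unfold wallisRatio; positivity

lemma wallisRatio_succ (n : ℕ) :
    wallisRatio (n + 1) = wallisRatio n * ((2 * n + 2) / (2 * n + 1)) := by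
  unfold wallisRatio
  have h : (2 * (n + 1)).factorial = (2 * n + 2) * ((2 * n + 1) * (2 * n).factorial) := by
    rw [show 2 * (n + 1) = 2 * n + 1 + 1 by ring, Nat.factorial_succ, Nat.factorial_succ]
  have h0 : ((2 * n).factorial : ℝ) ≠ 0 := by positivity
  have h1 : (2 * (n : ℝ) + 1) ≠ 0 := by positivity
  have h2 : (2 * (n : ℝ) + 2) ≠ 0 := by positivity
  rw [h, Nat.factorial_succ]
  push_cast
  field_simp
  ring

lemma wallisRatio_le (n : ℕ) : wallisRatio n ≤ n + 1 := by
  induction n with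
  | zero => simp [wallisRatio_zero]
  | succ n ih =>
    rw [wallisRatio_succ]
    have h1 : (0 : ℝ) < 2 * n + 1 := by positivity
    calc wallisRatio n * ((2 * n + 2) / (2 * n + 1))
        ≤ (n + 1) * ((2 * n + 2) / (2 * n + 1)) := by gcongr
      _ ≤ _ := by
        rw [← mul_div_assoc, div_le_iff₀ h1]
        push_cast
        nlinarith [(Nat.cast_nonneg n : (0 : ℝ) ≤ n)]

lemma integral_sin_odd (n : ℕ) :
    ∫ θ in (0 : ℝ)..π / 2, sin θ ^ (2 * n + 1) = wallisRatio (n + 1) / (2 * (n + 1)) := by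
  induction n with
  | zero =>
    rw [wallisRatio_succ, wallisRatio_zero]
    simp
  | succ n ih =>
    rw [show 2 * (n + 1) + 1 = 2 * n + 1 + 2 by ring, integral_sin_pow, ih,
      wallisRatio_succ (n + 1)]
    have h1 : (2 * (n : ℝ) + 3) ≠ 0 := by positivity
    have h2 : ((n : ℝ) + 1) ≠ 0 := by positivity
    have h3 : ((n : ℝ) + 2) ≠ 0 := by positivity
    simp
    field_simp
    ring

/-! ### The remainder of the series of `arcsin²` -/

/-- The error, at `sin θ`, of the first `N` terms of the series
`arcsin² x = ½ ∑_{n ≥ 1} 4ⁿ (n!)² / (2n)! · x²ⁿ / n²`. -/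
noncomputable def arcsinRem (N : ℕ) (θ : ℝ) : ℝ :=
  θ ^ 2 - ∑ n ∈ Finset.range N,
    wallisRatio (n + 1) / (2 * (n + 1) ^ 2) * sin θ ^ (2 * n + 2)

/-- The derivative of `arcsinRem N`. -/
noncomputable def arcsinRemDeriv (N : ℕ) (θ : ℝ) : ℝ :=
  2 * θ - ∑ n ∈ Finset.range N,
    wallisRatio (n + 1) / (n + 1) * (sin θ ^ (2 * n + 1) * cos θ)

lemma hasDerivAt_arcsinRem (N : ℕ) (θ : ℝ) :
    HasDerivAt (arcsinRem N) (arcsinRemDeriv N θ) θ := by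
  unfold arcsinRem arcsinRemDeriv
  refine HasDerivAt.sub (by simpa using hasDerivAt_pow 2 θ) (HasDerivAt.fun_sum fun n _ => ?_)
  refine (((hasDerivAt_sin θ).pow (2 * n + 2)).const_mul
    (wallisRatio (n + 1) / (2 * (n + 1) ^ 2))).congr_deriv ?_
  have h2 : ((n : ℝ) + 1) ≠ 0 := by positivity
  push_cast
  field_simp

/-- Differentiating twice makes the sum telescope. -/
lemma hasDerivAt_arcsinRemDeriv (N : ℕ) (θ : ℝ) :
    HasDerivAt (arcsinRemDeriv N) (2 * wallisRatio N * sin θ ^ (2 * N)) θ := by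
  induction N with
  | zero =>
    have h : arcsinRemDeriv 0 = fun θ => 2 * θ := by ext; simp [arcsinRemDeriv]
    rw [h, wallisRatio_zero]
    simpa using (hasDerivAt_id θ).const_mul 2
  | succ n ih =>
    have h : arcsinRemDeriv (n + 1) = fun θ => arcsinRemDeriv n θ -
        wallisRatio (n + 1) / (n + 1) * (sin θ ^ (2 * n + 1) * cos θ) := by
      ext; simp only [arcsinRemDeriv, Finset.sum_range_succ]; ring
    rw [h]
    refine (ih.sub ((((hasDerivAt_sin θ).pow (2 * n + 1)).mul (hasDerivAt_cos θ)).const_mul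
      (wallisRatio (n + 1) / (n + 1)))).congr_deriv ?_
    have h1 : (2 * (n : ℝ) + 1) ≠ 0 := by positivity
    have h2 : ((n : ℝ) + 1) ≠ 0 := by positivity
    have hc : cos θ * cos θ = 1 - sin θ ^ 2 := by rw [← cos_sq']; ring
    rw [wallisRatio_succ]
    push_cast
    simp only [Pi.pow_apply]
    rw [show (2 * (n : ℝ) + 1) * sin θ ^ (2 * n) * cos θ * cos θ =
      (2 * (n : ℝ) + 1) * sin θ ^ (2 * n) * (cos θ * cos θ) by ring, hc]
    field_simp
    ring

/-- A function with nonnegative second derivative that vanishes to second order at `0` is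
nonnegative to the right of `0`. -/
lemma nonneg_of_second_deriv {f f' f'' : ℝ → ℝ} {b : ℝ} (hb : 0 ≤ b)
    (h1 : ∀ x, HasDerivAt f (f' x) x) (h2 : ∀ x, HasDerivAt f' (f'' x) x)
    (h0 : f 0 = 0) (h0' : f' 0 = 0) (hf : ∀ x ∈ Set.Icc 0 b, 0 ≤ f'' x) : 0 ≤ f b := by
  have m1 : MonotoneOn f' (Set.Icc 0 b) :=
    monotoneOn_of_hasDerivWithinAt_nonneg (convex_Icc 0 b)
      (fun x _ => (h2 x).continuousAt.continuousWithinAt)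
      (fun x _ => (h2 x).hasDerivWithinAt) (fun x hx => hf x (interior_subset hx))
  have m2 : MonotoneOn f (Set.Icc 0 b) :=
    monotoneOn_of_hasDerivWithinAt_nonneg (convex_Icc 0 b)
      (fun x _ => (h1 x).continuousAt.continuousWithinAt)
      (fun x _ => (h1 x).hasDerivWithinAt) (fun x hx => by
        have hx' := interior_subset hx
        rw [← h0']
        exact m1 (Set.left_mem_Icc.2 hb) hx' hx'.1)
  rw [← h0]
  exact m2 (Set.left_mem_Icc.2 hb) (Set.right_mem_Icc.2 hb) hb

lemma arcsinRem_zero (N : ℕ) : arcsinRem N 0 = 0 := by simp [arcsinRem]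

lemma arcsinRemDeriv_zero (N : ℕ) : arcsinRemDeriv N 0 = 0 := by simp [arcsinRemDeriv]

lemma arcsinRem_nonneg (N : ℕ) {θ : ℝ} (h0 : 0 ≤ θ) : 0 ≤ arcsinRem N θ := by
  refine nonneg_of_second_deriv h0 (hasDerivAt_arcsinRem N) (hasDerivAt_arcsinRemDeriv N)
    (arcsinRem_zero N) (arcsinRemDeriv_zero N) fun x _ => ?_
  have := wallisRatio_pos N
  have := (even_two_mul N).pow_nonneg (sin x)
  positivity

lemma arcsinRem_le_sq (N : ℕ) (θ : ℝ) : arcsinRem N θ ≤ θ ^ 2 := by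
  unfold arcsinRem
  have : 0 ≤ ∑ n ∈ Finset.range N,
      wallisRatio (n + 1) / (2 * (n + 1) ^ 2) * sin θ ^ (2 * n + 2) := by
    refine Finset.sum_nonneg fun n _ => ?_
    have := wallisRatio_pos (n + 1)
    have := (even_two_mul (n + 1)).pow_nonneg (sin θ)
    rw [show 2 * n + 2 = 2 * (n + 1) by ring]
    positivity
  linarith

lemma arcsinRem_le (N : ℕ) {θ : ℝ} (h0 : 0 ≤ θ) (h1 : θ ≤ π / 2) :
    arcsinRem N θ ≤ wallisRatio N * sin θ ^ (2 * N) * θ ^ 2 := by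
  set c := wallisRatio N * sin θ ^ (2 * N) with hc
  have key := nonneg_of_second_deriv (f := fun x => c * x ^ 2 - arcsinRem N x)
    (f' := fun x => c * (2 * x) - arcsinRemDeriv N x)
    (f'' := fun x => c * 2 - 2 * wallisRatio N * sin x ^ (2 * N)) h0
    (fun x => ((by simpa using hasDerivAt_pow 2 x :
      HasDerivAt (fun x : ℝ => x ^ 2) (2 * x) x).const_mul c).sub (hasDerivAt_arcsinRem N x))
    (fun x => ((by simpa using (hasDerivAt_id x).const_mul 2 :
      HasDerivAt (fun x : ℝ => 2 * x) 2 x).const_mul c).sub (hasDerivAt_arcsinRemDeriv N x))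
    (by simp [arcsinRem_zero]) (by simp [arcsinRemDeriv_zero]) (fun x hx => by
      have hs : sin x ≤ sin θ := sin_le_sin_of_le_of_le_pi_div_two
        (by linarith [hx.1, pi_pos]) h1 hx.2
      have hs0 : 0 ≤ sin x := sin_nonneg_of_nonneg_of_le_pi hx.1 (by linarith [hx.2, pi_pos])
      have hp : sin x ^ (2 * N) ≤ sin θ ^ (2 * N) := pow_le_pow_left₀ hs0 hs _
      have := mul_le_mul_of_nonneg_left hp (wallisRatio_pos N).le
      simp only [hc]
      linarith)
  linarith

lemma tendsto_arcsinRem {θ : ℝ} (h0 : 0 ≤ θ) (h1 : θ < π / 2) :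
    Tendsto (fun N => arcsinRem N θ) atTop (𝓝 0) := by
  have hs0 : 0 ≤ sin θ := sin_nonneg_of_nonneg_of_le_pi h0 (by linarith [pi_pos])
  have hs1 : sin θ < 1 := by
    rw [← sin_pi_div_two]
    exact sin_lt_sin_of_lt_of_le_pi_div_two (by linarith [pi_pos]) le_rfl h1
  have hq0 : 0 ≤ sin θ ^ 2 := by positivity
  have hq1 : sin θ ^ 2 < 1 := pow_lt_one₀ hs0 hs1 two_ne_zero
  have hlim : Tendsto (fun N : ℕ => ((N : ℝ) * (sin θ ^ 2) ^ N + (sin θ ^ 2) ^ N) * θ ^ 2)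
      atTop (𝓝 0) := by
    simpa using ((tendsto_self_mul_const_pow_of_lt_one hq0 hq1).add
      (tendsto_pow_atTop_nhds_zero_of_lt_one hq0 hq1)).mul_const (θ ^ 2)
  refine squeeze_zero (fun N => arcsinRem_nonneg N h0) (fun N => ?_) hlim
  refine (arcsinRem_le N h0 h1.le).trans ?_
  rw [← pow_mul, ← add_one_mul]
  have := wallisRatio_le N
  gcongr

/-! ### The series as an integral -/

lemma sin_pos_of_mem {θ : ℝ} (h : θ ∈ Set.Ioc 0 (π / 2)) : 0 < sin θ :=
  sin_pos_of_pos_of_lt_pi h.1 (by linarith [h.2, pi_pos])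

lemma sq_div_sin_le {θ : ℝ} (h : θ ∈ Set.Ioc 0 (π / 2)) : θ ^ 2 / sin θ ≤ π / 2 * θ := by
  have h1 := mul_le_sin h.1.le h.2
  rw [div_le_iff₀ (sin_pos_of_mem h)]
  have h2 : 0 < π / 2 * θ := mul_pos (by positivity) h.1
  calc θ ^ 2 = π / 2 * θ * (2 / π * θ) := by field_simp
    _ ≤ _ := by gcongr

lemma intervalIntegrable_sq_div_sin :
    IntervalIntegrable (fun θ => θ ^ 2 / sin θ) volume 0 (π / 2) := by
  have hc : IntervalIntegrable (fun θ : ℝ => π / 2 * θ) volume 0 (π / 2) :=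
    (by fun_prop : Continuous fun θ : ℝ => π / 2 * θ).intervalIntegrable _ _
  refine hc.mono_fun
    ((measurable_id.pow_const 2).div measurable_sin).aestronglyMeasurable ?_
  rw [Set.uIoc_of_le (by positivity)]
  refine (ae_restrict_iff' measurableSet_Ioc).2 (Eventually.of_forall fun θ hθ => ?_)
  have := sq_div_sin_le hθ
  have h0 : 0 ≤ θ ^ 2 / sin θ := div_nonneg (sq_nonneg _) (sin_pos_of_mem hθ).le
  refine (norm_of_nonneg h0).trans_le ?_
  exact this.trans (le_abs_self _)

lemma continuous_arcsinRem (N : ℕ) : Continuous (arcsinRem N) := by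
  unfold arcsinRem; fun_prop

lemma tendsto_integral_arcsinRem :
    Tendsto (fun N => ∫ θ in (0 : ℝ)..π / 2, arcsinRem N θ / sin θ) atTop (𝓝 0) := by
  suffices h : Tendsto (fun N => ∫ θ in (0 : ℝ)..π / 2, arcsinRem N θ / sin θ) atTop
      (𝓝 (∫ θ in (0 : ℝ)..π / 2, (0 : ℝ))) by simpa using h
  refine intervalIntegral.tendsto_integral_filter_of_dominated_convergence
    (fun θ => θ ^ 2 / sin θ) (Eventually.of_forall fun N => ?_)
    (Eventually.of_forall fun N => Eventually.of_forall fun θ hθ => ?_)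
    intervalIntegrable_sq_div_sin ?_
  · exact ((continuous_arcsinRem N).measurable.div measurable_sin).aestronglyMeasurable
  · rw [Set.uIoc_of_le (by positivity)] at hθ
    have := (sin_pos_of_mem hθ)
    rw [norm_of_nonneg (div_nonneg (arcsinRem_nonneg N hθ.1.le) this.le)]
    have := arcsinRem_le_sq N θ
    gcongr
  · filter_upwards [compl_mem_ae_iff.2 (measure_singleton (μ := volume) (π / 2))] with θ hne hθ
    rw [Set.uIoc_of_le (by positivity)] at hθ
    simpa using (tendsto_arcsinRem hθ.1.le (lt_of_le_of_ne hθ.2 hne)).div_const (sin θ)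

lemma sum_wallis_eq (N : ℕ) :
    ∑ n ∈ Finset.range N, wallisRatio (n + 1) ^ 2 / ((n : ℝ) + 1) ^ 3 =
      4 * (∫ θ in (0 : ℝ)..π / 2, θ ^ 2 / sin θ) -
        4 * ∫ θ in (0 : ℝ)..π / 2, arcsinRem N θ / sin θ := by
  have hpow : ∀ n ∈ Finset.range N, IntervalIntegrable (fun θ : ℝ =>
      wallisRatio (n + 1) / (2 * (n + 1) ^ 2) * sin θ ^ (2 * n + 1)) volume 0 (π / 2) :=
    fun n _ => (by fun_prop : Continuous fun θ : ℝ =>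
      wallisRatio (n + 1) / (2 * (n + 1) ^ 2) * sin θ ^ (2 * n + 1)).intervalIntegrable _ _
  have h : ∫ θ in (0 : ℝ)..π / 2, arcsinRem N θ / sin θ =
      ∫ θ in (0 : ℝ)..π / 2, (θ ^ 2 / sin θ - ∑ n ∈ Finset.range N,
        wallisRatio (n + 1) / (2 * (n + 1) ^ 2) * sin θ ^ (2 * n + 1)) := by
    refine intervalIntegral.integral_congr_ae (Eventually.of_forall fun θ hθ => ?_)
    rw [Set.uIoc_of_le (by positivity)] at hθ
    have hs := (sin_pos_of_mem hθ).ne'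
    rw [arcsinRem, sub_div, Finset.sum_div]
    congr 1
    refine Finset.sum_congr rfl fun n _ => ?_
    rw [div_eq_iff hs]
    ring
  rw [h, intervalIntegral.integral_sub intervalIntegrable_sq_div_sin
      (Continuous.intervalIntegrable (by fun_prop) _ _), intervalIntegral.integral_finsetSum hpow, mul_sub,
    sub_sub_cancel, Finset.mul_sum]
  refine Finset.sum_congr rfl fun n _ => ?_
  rw [intervalIntegral.integral_const_mul, integral_sin_odd]
  have h2 : ((n : ℝ) + 1) ≠ 0 := by positivity
  field_simp
  ring

lemma hasSum_wallis :
    HasSum (fun n : ℕ => wallisRatio (n + 1) ^ 2 / ((n : ℝ) + 1) ^ 3)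
      (4 * ∫ θ in (0 : ℝ)..π / 2, θ ^ 2 / sin θ) := by
  rw [hasSum_iff_tendsto_nat_of_nonneg (fun n => by positivity)]
  simp only [sum_wallis_eq]
  simpa using (tendsto_integral_arcsinRem.const_mul 4).const_sub
    (4 * ∫ θ in (0 : ℝ)..π / 2, θ ^ 2 / sin θ)

/-! ### The integral in terms of `G` and `ζ(3)` -/

/-- The Riemann–Lebesgue lemma for the even cosines on `[0, π/2]`. -/
lemma tendsto_integral_cos {g : ℝ → ℝ} (hg : IntervalIntegrable g volume 0 (π / 2)) :
    Tendsto (fun N : ℕ => ∫ θ in (0 : ℝ)..π / 2, cos (2 * N * θ) * g θ) atTop (𝓝 0) := by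
  -- Mathlib's character is `exp (2πi ·)`, so frequency `N / π` gives `exp (-2iNθ)`.
  have hN : Tendsto (fun N : ℕ => (N : ℝ) / π) atTop (cocompact ℝ) :=
    (tendsto_natCast_atTop_atTop.atTop_div_const pi_pos).mono_right atTop_le_cocompact
  have h := (Real.tendsto_integral_exp_smul_cocompact
    ((Set.Ioc 0 (π / 2)).indicator fun θ => (g θ : ℂ))).comp hN
  have h' := (Complex.continuous_re.tendsto 0).comp h
  rw [Complex.zero_re] at h'
  refine h'.congr fun N => ?_
  simp only [Function.comp_apply]
  have e : ∀ v : ℝ, Real.fourierChar (-(v * ((N : ℝ) / π))) •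
      (Set.Ioc 0 (π / 2)).indicator (fun θ => (g θ : ℂ)) v =
      (Set.Ioc 0 (π / 2)).indicator (fun θ : ℝ =>
        Complex.exp ((-(2 * N * θ) : ℝ) * Complex.I) * (g θ : ℂ)) v := by
    intro v
    by_cases hv : v ∈ Set.Ioc 0 (π / 2)
    · rw [Set.indicator_of_mem hv, Set.indicator_of_mem hv, Circle.smul_def, smul_eq_mul,
        Real.fourierChar_apply]
      congr 5
      field_simp
    · simp [Set.indicator_of_notMem hv]
  simp only [e]
  rw [integral_indicator measurableSet_Ioc, ← intervalIntegral.integral_of_le (by positivity)]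
  have hint : IntervalIntegrable (fun θ : ℝ =>
      Complex.exp ((-(2 * N * θ) : ℝ) * Complex.I) * (g θ : ℂ)) volume 0 (π / 2) :=
    IntervalIntegrable.continuousOn_mul ⟨hg.1.ofReal, hg.2.ofReal⟩
      (by fun_prop : Continuous fun θ : ℝ =>
        Complex.exp ((-(2 * N * θ) : ℝ) * Complex.I)).continuousOn
  have := Complex.reCLM.intervalIntegral_comp_comm hint
  simp only [Complex.reCLM_apply] at this
  rw [← this]
  refine intervalIntegral.integral_congr fun θ _ => ?_
  simp only [Complex.re_mul_ofReal, Complex.exp_ofReal_mul_I_re, cos_neg]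

lemma two_sin_mul_sum_odd_sin (N : ℕ) (θ : ℝ) :
    2 * sin θ * ∑ j ∈ Finset.range N, sin ((2 * j + 1) * θ) = 1 - cos (2 * N * θ) := by
  induction N with
  | zero => simp
  | succ n ih =>
    rw [Finset.sum_range_succ, mul_add, ih]
    have h1 : 2 * ((n + 1 : ℕ) : ℝ) * θ = (2 * n + 1) * θ + θ := by push_cast; ring
    have h2 : 2 * (n : ℝ) * θ = (2 * n + 1) * θ - θ := by ring
    rw [h1, h2, cos_add, cos_sub]
    ring

lemma integral_sq_mul_sin (j : ℕ) :
    ∫ θ in (0 : ℝ)..π / 2, θ ^ 2 * sin ((2 * j + 1) * θ) =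
      π * ((-1) ^ j / (2 * (j : ℝ) + 1) ^ 2) - 2 * (1 / (2 * (j : ℝ) + 1) ^ 3) := by
  set k : ℝ := 2 * j + 1 with hk
  have hk0 : k ≠ 0 := by positivity
  have hd : ∀ θ : ℝ, HasDerivAt (fun θ => -(θ ^ 2 * cos (k * θ)) / k +
      2 * (θ * sin (k * θ)) / k ^ 2 + 2 * cos (k * θ) / k ^ 3) (θ ^ 2 * sin (k * θ)) θ := by
    intro θ
    have hl : HasDerivAt (fun θ => k * θ) k θ := by simpa using (hasDerivAt_id θ).const_mul k
    have hs := hl.sin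
    have hc := hl.cos
    have hq : HasDerivAt (fun θ : ℝ => θ ^ 2) (2 * θ) θ := by simpa using hasDerivAt_pow 2 θ
    refine ((((hq.mul hc).neg.div_const k).add
      ((((hasDerivAt_id θ).mul hs).const_mul 2).div_const (k ^ 2))).add
      ((hc.const_mul 2).div_const (k ^ 3))).congr_deriv ?_
    simp only [id]
    field_simp
    ring
  rw [intervalIntegral.integral_eq_sub_of_hasDerivAt (fun θ _ => hd θ)
    ((by fun_prop : Continuous fun θ : ℝ => θ ^ 2 * sin (k * θ)).intervalIntegrable _ _)]
  have hs : sin (k * (π / 2)) = (-1) ^ j := by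
    rw [show k * (π / 2) = π / 2 + j * π by rw [hk]; ring, sin_add_nat_mul_pi, sin_pi_div_two,
      mul_one]
  have hc : cos (k * (π / 2)) = 0 := by
    rw [show k * (π / 2) = π / 2 + j * π by rw [hk]; ring, cos_add_nat_mul_pi, cos_pi_div_two,
      mul_zero]
  rw [hs, hc]
  simp
  ring

lemma integral_sq_div_sin_eq (N : ℕ) :
    ∫ θ in (0 : ℝ)..π / 2, θ ^ 2 / sin θ =
      2 * ∑ j ∈ Finset.range N,
        (π * ((-1) ^ j / (2 * (j : ℝ) + 1) ^ 2) - 2 * (1 / (2 * (j : ℝ) + 1) ^ 3)) +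
      ∫ θ in (0 : ℝ)..π / 2, cos (2 * N * θ) * (θ ^ 2 / sin θ) := by
  have hj : ∀ j ∈ Finset.range N, IntervalIntegrable (fun θ : ℝ =>
      θ ^ 2 * sin ((2 * j + 1) * θ)) volume 0 (π / 2) :=
    fun j _ => (by fun_prop : Continuous fun θ : ℝ =>
      θ ^ 2 * sin ((2 * j + 1) * θ)).intervalIntegrable _ _
  simp only [← integral_sq_mul_sin]
  rw [← intervalIntegral.integral_finsetSum hj, ← intervalIntegral.integral_const_mul,
    ← intervalIntegral.integral_add (Continuous.intervalIntegrable (by fun_prop) _ _)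
      (intervalIntegrable_sq_div_sin.continuousOn_mul
        (by fun_prop : Continuous fun θ : ℝ => cos (2 * N * θ)).continuousOn)]
  refine intervalIntegral.integral_congr_ae (Eventually.of_forall fun θ hθ => ?_)
  rw [Set.uIoc_of_le (by positivity)] at hθ
  have hs := (sin_pos_of_mem hθ).ne'
  have h := two_sin_mul_sum_odd_sin N θ
  rw [← Finset.mul_sum]
  generalize ∑ j ∈ Finset.range N, sin ((2 * j + 1) * θ) = S at h ⊢
  generalize cos (2 * N * θ) = c at h ⊢
  field_simp
  linear_combination (-θ ^ 2) * h

lemma summable_one_div_odd_pow {p : ℕ} (hp : 1 < p) :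
    Summable (fun n : ℕ => 1 / (2 * (n : ℝ) + 1) ^ p) := by
  have h := (Real.summable_one_div_nat_pow.2 hp).comp_injective
    (i := fun n : ℕ => 2 * n + 1) (fun a b h => by simpa using h)
  simpa [Function.comp_def] using h

lemma tsum_odd_cube :
    ∑' n : ℕ, 1 / (2 * (n : ℝ) + 1) ^ 3 = 7 / 8 * ∑' n : ℕ, 1 / ((n : ℝ) + 1) ^ 3 := by
  have hs : Summable (fun n : ℕ => 1 / (n : ℝ) ^ 3) := Real.summable_one_div_nat_pow.2 (by norm_num)
  have he : ∀ k : ℕ, 1 / ((2 * k : ℕ) : ℝ) ^ 3 = 1 / 8 * (1 / (k : ℝ) ^ 3) := by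
    intro k; push_cast; rw [mul_pow, one_div_mul_one_div]; norm_num
  have hodd := summable_one_div_odd_pow (p := 3) (by norm_num)
  have h := tsum_even_add_odd (f := fun n : ℕ => 1 / (n : ℝ) ^ 3)
    (by simp only [he]; exact hs.mul_left _) (by push_cast; exact hodd)
  simp only [he, tsum_mul_left] at h
  have h0 := hs.tsum_eq_zero_add
  push_cast at h h0
  norm_num at h h0 ⊢
  linarith

lemma integral_sq_div_sin :
    ∫ θ in (0 : ℝ)..π / 2, θ ^ 2 / sin θ =
      2 * (π * (∑' n : ℕ, (-1 : ℝ) ^ n / (2 * (n : ℝ) + 1) ^ 2) -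
        2 * ∑' n : ℕ, 1 / (2 * (n : ℝ) + 1) ^ 3) := by
  have hG : Summable (fun n : ℕ => (-1 : ℝ) ^ n / (2 * (n : ℝ) + 1) ^ 2) := by
    refine Summable.of_norm ((summable_one_div_odd_pow (p := 2) (by norm_num)).congr fun n => ?_)
    rw [norm_div, norm_pow, norm_neg, norm_one, one_pow, norm_of_nonneg (by positivity)]
  have hsum := ((hG.hasSum.mul_left π).sub
    ((summable_one_div_odd_pow (p := 3) (by norm_num)).hasSum.mul_left 2)).tendsto_sum_nat
  have hlim := (hsum.const_mul 2).add (tendsto_integral_cos intervalIntegrable_sq_div_sin)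
  rw [add_zero] at hlim
  exact tendsto_nhds_unique
    (tendsto_const_nhds.congr fun N => integral_sq_div_sin_eq N) hlim

/-- `8πG − 14ζ(3) = ∑_{n=1}^∞ 2^{4n} (n!)⁴/(n³ ((2n)!)²)`. -/
theorem stmt_18 :
    8 * π * (∑' n : ℕ, (-1 : ℝ) ^ n / (2 * (n : ℝ) + 1) ^ 2) -
        14 * (∑' n : ℕ, 1 / ((n : ℝ) + 1) ^ 3) =
      ∑' n : ℕ, (2 : ℝ) ^ (4 * (n + 1)) * (((n + 1).factorial : ℝ)) ^ 4 /
        (((n : ℝ) + 1) ^ 3 * (((2 * (n + 1)).factorial : ℝ)) ^ 2) := by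
  have h : ∀ n : ℕ, (2 : ℝ) ^ (4 * (n + 1)) * (((n + 1).factorial : ℝ)) ^ 4 /
      (((n : ℝ) + 1) ^ 3 * (((2 * (n + 1)).factorial : ℝ)) ^ 2) =
      wallisRatio (n + 1) ^ 2 / ((n : ℝ) + 1) ^ 3 := by
    intro n
    have h4 : (2 : ℝ) ^ (4 * (n + 1)) = (4 ^ (n + 1)) ^ 2 := by
      rw [show (4 : ℝ) = 2 ^ 2 by norm_num, ← pow_mul, ← pow_mul]; congr 1; ring
    rw [wallisRatio, h4, div_pow, div_div, mul_comm (((n : ℝ) + 1) ^ 3)]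
    congr 1
    ring
  simp only [h]
  rw [hasSum_wallis.tsum_eq, integral_sq_div_sin, tsum_odd_cube]
  ring
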